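/- arXiv:2511.22495 — 10 statements merged into one kernel-verified Lean document; each statement's English description precedes it below -/
import Mathlib

section
/- The proper (i.e., different from the whole algebra) subalgebras of the crystal lattice C, i.e., the nonempty subsets of C closed under ∧, ∨, ¬, and ·, are exactly the following eight: {a}, {b}, {⊥,⊤}, {⊥,a,⊤}, {⊥,b,⊤}, {⊥,t,f,⊤}, {⊥,t,a,f,⊤}, and {⊥,t,b,f,⊤}. -/
/-- The universe of the crystal lattice `C`: six elements `⊥, t, a, b, f, ⊤`. -/
inductive Cry : Type
  | bot | t | a | b | f | top
  deriving DecidableEq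

namespace Cry

/-- The lattice order of `C`: `⊥ < t < a < f < ⊤` and `t < b < f`, with `a, b` incomparable. -/
def leb : Cry → Cry → Bool
  | bot, _ => true
  | _, top => true
  | t, bot => false
  | t, _ => true
  | a, a => true
  | a, f => true
  | a, _ => false
  | b, b => true
  | b, f => true
  | b, _ => false
  | f, f => true
  | f, _ => false
  | top, _ => false

/-- Meet: the only incomparable pair is `{a, b}`, whose meet is `t`. -/
def meet (x y : Cry) : Cry := if leb x y then x else if leb y x then y else t

/-- Join: the only incomparable pair is `{a, b}`, whose join is `f`. -/
def join (x y : Cry) : Cry := if leb x y then y else if leb y x then x else f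

/-- The involution `¬`. -/
def neg : Cry → Cry
  | bot => top
  | t => f
  | a => a
  | b => b
  | f => t
  | top => bot

/-- Fusion `·`: commutative with identity `t`; `⊥·x = ⊥`; `⊤·x = ⊤` for `x ≠ ⊥`;
`a·a = a`; `b·b = b`; and `a·b = a·f = b·f = f·f = ⊤`. -/
def fus : Cry → Cry → Cry
  | bot, _ => bot
  | _, bot => bot
  | top, _ => top
  | _, top => top
  | t, x => x
  | x, t => x
  | a, a => a
  | b, b => b
  | _, _ => top

/-- A subalgebra of `C`: a nonempty subset closed under `∧`, `∨`, `·`, and `¬`. -/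
def IsSubalg (S : Set Cry) : Prop :=
  S.Nonempty ∧
  (∀ x ∈ S, ∀ y ∈ S, meet x y ∈ S ∧ join x y ∈ S ∧ fus x y ∈ S) ∧
  (∀ x ∈ S, neg x ∈ S)

/-- A congruence on the subset `S` (with the operations inherited from `C`):
an equivalence relation on `S` compatible with `∧`, `∨`, `·`, and `¬`. -/
def IsCongOn (S : Set Cry) (r : Cry → Cry → Prop) : Prop :=
  (∀ x ∈ S, r x x) ∧
  (∀ x ∈ S, ∀ y ∈ S, r x y → r y x) ∧
  (∀ x ∈ S, ∀ y ∈ S, ∀ z ∈ S, r x y → r y z → r x z) ∧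
  (∀ x ∈ S, ∀ y ∈ S, ∀ u ∈ S, ∀ v ∈ S, r x y → r u v →
      r (meet x u) (meet y v) ∧ r (join x u) (join y v) ∧ r (fus x u) (fus y v)) ∧
  (∀ x ∈ S, ∀ y ∈ S, r x y → r (neg x) (neg y))

end Cry

theorem Cry.forall_iff' (p : Cry → Prop) :
    (∀ x, p x) ↔ p .bot ∧ p .t ∧ p .a ∧ p .b ∧ p .f ∧ p .top :=
  ⟨fun h => ⟨h _, h _, h _, h _, h _, h _⟩,
   fun ⟨h1, h2, h3, h4, h5, h6⟩ x => by cases x <;> assumption⟩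

theorem Cry.exists_iff' (p : Cry → Prop) :
    (∃ x, p x) ↔ p .bot ∨ p .t ∨ p .a ∨ p .b ∨ p .f ∨ p .top := by
  constructor
  · rintro ⟨x, h⟩
    cases x <;> simp [h]
  · rintro (h | h | h | h | h | h) <;> exact ⟨_, h⟩

/-- The proper subalgebras of the crystal lattice `C` are exactly the eight listed sets. -/
theorem proper_subalgebras (S : Set Cry) :
    (Cry.IsSubalg S ∧ S ≠ Set.univ) ↔
      S ∈ ({{Cry.a}, {Cry.b}, {Cry.bot, Cry.top}, {Cry.bot, Cry.a, Cry.top},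
            {Cry.bot, Cry.b, Cry.top}, {Cry.bot, Cry.t, Cry.f, Cry.top},
            {Cry.bot, Cry.t, Cry.a, Cry.f, Cry.top},
            {Cry.bot, Cry.t, Cry.b, Cry.f, Cry.top}} : Set (Set Cry)) := by
  simp only [Cry.IsSubalg, Set.Nonempty, Set.mem_insert_iff, Set.mem_singleton_iff, Set.ext_iff,
    ne_eq, Cry.forall_iff', Cry.exists_iff', Cry.meet, Cry.join, Cry.fus, Cry.neg, Cry.leb,
    Set.mem_univ, iff_true, reduceCtorEq, or_false, false_or, or_true, true_or, iff_false,
    if_true, if_false, Bool.false_eq_true]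
  by_cases h1 : Cry.bot ∈ S <;> by_cases h2 : Cry.t ∈ S <;> by_cases h3 : Cry.a ∈ S <;>
    by_cases h4 : Cry.b ∈ S <;> by_cases h5 : Cry.f ∈ S <;> by_cases h6 : Cry.top ∈ S <;>
    simp [h1, h2, h3, h4, h5, h6]
end

section
/- Every congruence on the four-element subalgebra {⊥, t, f, ⊤} of the crystal lattice C (with the operations ∧, ∨, ¬, · inherited from C) other than the identity relation relates f and t; consequently, this subalgebra is simple, i.e., its only congruences are the identity relation and the full relation. -/
theorem four_key (r : Cry → Cry → Prop)
    (h : Cry.IsCongOn {Cry.bot, Cry.t, Cry.f, Cry.top} r)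
    (hx : ∃ x ∈ ({Cry.bot, Cry.t, Cry.f, Cry.top} : Set Cry),
        ∃ y ∈ ({Cry.bot, Cry.t, Cry.f, Cry.top} : Set Cry), r x y ∧ x ≠ y) :
    ∀ x ∈ ({Cry.bot, Cry.t, Cry.f, Cry.top} : Set Cry),
        ∀ y ∈ ({Cry.bot, Cry.t, Cry.f, Cry.top} : Set Cry), r x y := by
  obtain ⟨hr, hs, ht, hc, hn⟩ := h
  have mb : Cry.bot ∈ ({Cry.bot, Cry.t, Cry.f, Cry.top} : Set Cry) := by simp
  have mt : Cry.t ∈ ({Cry.bot, Cry.t, Cry.f, Cry.top} : Set Cry) := by simp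
  have mf : Cry.f ∈ ({Cry.bot, Cry.t, Cry.f, Cry.top} : Set Cry) := by simp
  have mT : Cry.top ∈ ({Cry.bot, Cry.t, Cry.f, Cry.top} : Set Cry) := by simp
  -- each nontrivial pair collapses `⊥` and `t`
  have h1 : r Cry.bot Cry.f → r Cry.bot Cry.t := fun h =>
    (hc _ mb _ mf _ mt _ mt h (hr _ mt)).1
  have h2 : r Cry.bot Cry.top → r Cry.bot Cry.t := fun h =>
    (hc _ mb _ mT _ mt _ mt h (hr _ mt)).1
  have h3 : r Cry.t Cry.top → r Cry.bot Cry.t := fun h =>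
    h1 (hs _ mf _ mb (hn _ mt _ mT h))
  have h4 : r Cry.f Cry.top → r Cry.bot Cry.t := fun h =>
    hs _ mt _ mb (hn _ mf _ mT h)
  have h5 : r Cry.t Cry.f → r Cry.bot Cry.t := fun h =>
    h4 (hc _ mt _ mf _ mf _ mf h (hr _ mf)).2.2
  have key : r Cry.bot Cry.t := by
    obtain ⟨x, hx, y, hy, hxy, hne⟩ := hx
    have hyx := hs _ hx _ hy hxy
    rcases hx with rfl | rfl | rfl | rfl <;> rcases hy with rfl | rfl | rfl | rfl <;>
      first
        | exact absurd rfl hne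
        | exact hxy
        | exact hyx
        | exact h1 hxy
        | exact h1 hyx
        | exact h2 hxy
        | exact h2 hyx
        | exact h3 hxy
        | exact h3 hyx
        | exact h4 hxy
        | exact h4 hyx
        | exact h5 hxy
        | exact h5 hyx
  have kf : r Cry.bot Cry.f := (hc _ mb _ mt _ mf _ mf key (hr _ mf)).2.2
  have kT : r Cry.bot Cry.top := hs _ mT _ mb
    (ht _ mT _ mf _ mb (hn _ mb _ mt key) (hs _ mb _ mf kf))
  have all : ∀ x ∈ ({Cry.bot, Cry.t, Cry.f, Cry.top} : Set Cry), r Cry.bot x := by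
    intro x hx
    rcases hx with rfl | rfl | rfl | rfl
    · exact hr _ mb
    · exact key
    · exact kf
    · exact kT
  intro x hx y hy
  exact ht _ hx _ mb _ hy (hs _ mb _ hx (all x hx)) (all y hy)

/-- Every congruence on `{⊥, t, f, ⊤}` other than the identity relates `f` and `t`;
consequently this subalgebra is simple. -/
theorem four_element_simple :
    (∀ r : Cry → Cry → Prop, Cry.IsCongOn {Cry.bot, Cry.t, Cry.f, Cry.top} r →
      (∃ x ∈ ({Cry.bot, Cry.t, Cry.f, Cry.top} : Set Cry),
        ∃ y ∈ ({Cry.bot, Cry.t, Cry.f, Cry.top} : Set Cry), r x y ∧ x ≠ y) →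
      r Cry.f Cry.t) ∧
    (∀ r : Cry → Cry → Prop, Cry.IsCongOn {Cry.bot, Cry.t, Cry.f, Cry.top} r →
      (∀ x ∈ ({Cry.bot, Cry.t, Cry.f, Cry.top} : Set Cry),
        ∀ y ∈ ({Cry.bot, Cry.t, Cry.f, Cry.top} : Set Cry), r x y ↔ x = y) ∨
      (∀ x ∈ ({Cry.bot, Cry.t, Cry.f, Cry.top} : Set Cry),
        ∀ y ∈ ({Cry.bot, Cry.t, Cry.f, Cry.top} : Set Cry), r x y)) := by
  refine ⟨fun r h hx => four_key r h hx _ (by simp) _ (by simp), fun r h => ?_⟩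
  by_cases hx : ∃ x ∈ ({Cry.bot, Cry.t, Cry.f, Cry.top} : Set Cry),
        ∃ y ∈ ({Cry.bot, Cry.t, Cry.f, Cry.top} : Set Cry), r x y ∧ x ≠ y
  · exact Or.inr (four_key r h hx)
  · left
    intro x hxm y hym
    constructor
    · intro hxy
      by_contra hne
      exact hx ⟨x, hxm, y, hym, hxy, hne⟩
    · rintro rfl
      exact h.1 x hxm
end

section
/- Every congruence on the five-element subalgebra {⊥, t, a, f, ⊤} of the crystal lattice C (with the operations ∧, ∨, ¬, · inherited from C) that relates a and t is the full relation, and every congruence on this subalgebra that relates a and ⊤ is the full relation. -/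
/-- On the subalgebra `{⊥, t, a, f, ⊤}` of `C`, any congruence relating `a` and `t`,
or relating `a` and `⊤`, is the full relation. -/
theorem cong_a_collapse (r : Cry → Cry → Prop)
    (hcong : Cry.IsCongOn {Cry.bot, Cry.t, Cry.a, Cry.f, Cry.top} r) :
    (r Cry.a Cry.t →
      ∀ x ∈ ({Cry.bot, Cry.t, Cry.a, Cry.f, Cry.top} : Set Cry),
        ∀ y ∈ ({Cry.bot, Cry.t, Cry.a, Cry.f, Cry.top} : Set Cry), r x y) ∧
    (r Cry.a Cry.top →
      ∀ x ∈ ({Cry.bot, Cry.t, Cry.a, Cry.f, Cry.top} : Set Cry),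
        ∀ y ∈ ({Cry.bot, Cry.t, Cry.a, Cry.f, Cry.top} : Set Cry), r x y) := by
  obtain ⟨hr, hs, ht, hop, hn⟩ := hcong
  have mb : Cry.bot ∈ ({Cry.bot, Cry.t, Cry.a, Cry.f, Cry.top} : Set Cry) := by simp
  have mt : Cry.t ∈ ({Cry.bot, Cry.t, Cry.a, Cry.f, Cry.top} : Set Cry) := by simp
  have ma : Cry.a ∈ ({Cry.bot, Cry.t, Cry.a, Cry.f, Cry.top} : Set Cry) := by simp
  have mf : Cry.f ∈ ({Cry.bot, Cry.t, Cry.a, Cry.f, Cry.top} : Set Cry) := by simp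
  have mT : Cry.top ∈ ({Cry.bot, Cry.t, Cry.a, Cry.f, Cry.top} : Set Cry) := by simp
  have key : r Cry.a Cry.top →
      ∀ x ∈ ({Cry.bot, Cry.t, Cry.a, Cry.f, Cry.top} : Set Cry),
        ∀ y ∈ ({Cry.bot, Cry.t, Cry.a, Cry.f, Cry.top} : Set Cry), r x y := by
    intro h
    have hab : r Cry.a Cry.bot := hn _ ma _ mT h
    have htb : r Cry.t Cry.bot := (hop _ ma _ mb _ mt _ mt hab (hr _ mt)).1
    have hfT : r Cry.f Cry.top := (hop _ ma _ mT _ mf _ mf h (hr _ mf)).2.1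
    have hat : r Cry.a Cry.t := ht _ ma _ mb _ mt hab (hs _ mt _ mb htb)
    have haf : r Cry.a Cry.f := ht _ ma _ mT _ mf h (hs _ mf _ mT hfT)
    have all : ∀ x ∈ ({Cry.bot, Cry.t, Cry.a, Cry.f, Cry.top} : Set Cry), r Cry.a x := by
      rintro x (rfl | rfl | rfl | rfl | rfl)
      · exact hab
      · exact hat
      · exact hr _ ma
      · exact haf
      · exact h
    intro x hx y hy
    exact ht _ hx _ ma _ hy (hs _ ma _ hx (all x hx)) (all y hy)
  refine ⟨fun h => key ?_, key⟩
  have haf : r Cry.a Cry.f := hn _ ma _ mt h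
  exact (hop _ ma _ ma _ ma _ mf (hr _ ma) haf).2.2
end

section
/- The five-element subalgebra {⊥, t, a, f, ⊤} of the crystal lattice C (with the operations ∧, ∨, ¬, · inherited from C) is simple: its only congruences are the identity relation and the full relation. The same holds for the subalgebra {⊥, t, b, f, ⊤}. -/
theorem Cry.simple_aux (c : Cry) (hc : c = Cry.a ∨ c = Cry.b) (r : Cry → Cry → Prop)
    (h : Cry.IsCongOn {Cry.bot, Cry.t, c, Cry.f, Cry.top} r) :
    (∀ x ∈ ({Cry.bot, Cry.t, c, Cry.f, Cry.top} : Set Cry),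
      ∀ y ∈ ({Cry.bot, Cry.t, c, Cry.f, Cry.top} : Set Cry), r x y ↔ x = y) ∨
    (∀ x ∈ ({Cry.bot, Cry.t, c, Cry.f, Cry.top} : Set Cry),
      ∀ y ∈ ({Cry.bot, Cry.t, c, Cry.f, Cry.top} : Set Cry), r x y) := by
  obtain ⟨hr, hs, ht, ho, hn⟩ := h
  generalize hS : ({Cry.bot, Cry.t, c, Cry.f, Cry.top} : Set Cry) = S at *
  have mb : Cry.bot ∈ S := by simp [← hS]
  have mt : Cry.t ∈ S := by simp [← hS]
  have mc : c ∈ S := by simp [← hS]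
  have mf : Cry.f ∈ S := by simp [← hS]
  have mT : Cry.top ∈ S := by simp [← hS]
  have cases : ∀ x ∈ S, x = Cry.bot ∨ x = Cry.t ∨ x = c ∨ x = Cry.f ∨ x = Cry.top := by
    intro x hx
    simpa [← hS] using hx
  by_cases hbt : r Cry.bot Cry.t
  · right
    have key : ∀ x ∈ S, r Cry.bot x := by
      intro x hx
      have := (ho _ mb _ mt x hx x hx hbt (hr x hx)).2.2
      cases x <;> exact this
    intro x hx y hy
    exact ht x hx _ mb y hy (hs _ mb x hx (key x hx)) (key y hy)
  · left
    have nb : ∀ x ∈ S, x ≠ Cry.bot → ¬ r Cry.bot x := by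
      intro x hx hne h
      have := (ho _ mb x hx _ mt _ mt h (hr _ mt)).1
      cases x <;> first | exact hne rfl | exact hbt this
    have nT : ∀ x ∈ S, x ≠ Cry.top → ¬ r Cry.top x := by
      intro x hx hne h
      have h1 := hn _ mT x hx h
      have hm : Cry.neg x ∈ S := by
        rcases cases x hx with rfl | rfl | rfl | rfl | rfl
        · exact mT
        · exact mf
        · rcases hc with rfl | rfl <;> exact mc
        · exact mt
        · exact mb
      refine nb _ hm ?_ h1
      cases x <;> simp_all [Cry.neg]
    have ntf : ¬ r Cry.t Cry.f := by
      intro h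
      have h1 : r Cry.t Cry.top := (ho _ mt _ mf _ mt _ mf h h).2.2
      exact nT _ mt (by decide) (hs _ mt _ mT h1)
    have ntc : ¬ r Cry.t c := by
      intro h
      have h1 : r Cry.f c := by
        have := hn _ mt _ mc h
        rcases hc with rfl | rfl <;> exact this
      exact ntf (ht _ mt _ mc _ mf h (hs _ mf _ mc h1))
    have ncf : ¬ r c Cry.f := by
      intro h
      have h1 : r c Cry.t := by
        have := hn _ mc _ mf h
        rcases hc with rfl | rfl <;> exact this
      exact ntc (hs _ mc _ mt h1)
    intro x hx y hy
    refine ⟨fun h => ?_, fun h => h ▸ hr x hx⟩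
    by_contra hne
    have h' := hs x hx y hy h
    rcases cases x hx with rfl | rfl | e | rfl | rfl
    · exact nb y hy (Ne.symm hne) h
    · rcases cases y hy with rfl | rfl | rfl | rfl | rfl
      · exact nb _ hx hne h'
      · exact hne rfl
      · exact ntc h
      · exact ntf h
      · exact nT _ hx hne h'
    · subst e
      rcases cases y hy with rfl | rfl | rfl | rfl | rfl
      · exact nb _ hx hne h'
      · exact ntc h'
      · exact hne rfl
      · exact ncf h
      · exact nT _ hx hne h'
    · rcases cases y hy with rfl | rfl | rfl | rfl | rfl
      · exact nb _ hx hne h'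
      · exact ntf h'
      · exact ncf h'
      · exact hne rfl
      · exact nT _ hx hne h'
    · exact nT y hy (Ne.symm hne) h

/-- The five-element subalgebras `{⊥, t, a, f, ⊤}` and `{⊥, t, b, f, ⊤}` of `C` are simple. -/
theorem five_element_simple :
    (∀ r : Cry → Cry → Prop, Cry.IsCongOn {Cry.bot, Cry.t, Cry.a, Cry.f, Cry.top} r →
      (∀ x ∈ ({Cry.bot, Cry.t, Cry.a, Cry.f, Cry.top} : Set Cry),
        ∀ y ∈ ({Cry.bot, Cry.t, Cry.a, Cry.f, Cry.top} : Set Cry), r x y ↔ x = y) ∨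
      (∀ x ∈ ({Cry.bot, Cry.t, Cry.a, Cry.f, Cry.top} : Set Cry),
        ∀ y ∈ ({Cry.bot, Cry.t, Cry.a, Cry.f, Cry.top} : Set Cry), r x y)) ∧
    (∀ r : Cry → Cry → Prop, Cry.IsCongOn {Cry.bot, Cry.t, Cry.b, Cry.f, Cry.top} r →
      (∀ x ∈ ({Cry.bot, Cry.t, Cry.b, Cry.f, Cry.top} : Set Cry),
        ∀ y ∈ ({Cry.bot, Cry.t, Cry.b, Cry.f, Cry.top} : Set Cry), r x y ↔ x = y) ∨
      (∀ x ∈ ({Cry.bot, Cry.t, Cry.b, Cry.f, Cry.top} : Set Cry),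
        ∀ y ∈ ({Cry.bot, Cry.t, Cry.b, Cry.f, Cry.top} : Set Cry), r x y)) := by
  exact ⟨Cry.simple_aux Cry.a (Or.inl rfl), Cry.simple_aux Cry.b (Or.inr rfl)⟩
end

section
/- The crystal lattice C itself is simple: every equivalence relation on its universe that is compatible with the operations ∧, ∨, ¬, and · is either the identity relation or the full relation. -/
/-- The crystal lattice `C` itself is simple: every congruence is the identity or full. -/
theorem crystal_simple (r : Cry → Cry → Prop)
    (hcong : Cry.IsCongOn Set.univ r) :
    (∀ x y : Cry, r x y → x = y) ∨ (∀ x y : Cry, r x y) := by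
  obtain ⟨hr, hs, ht, hc, hn⟩ := hcong
  simp only [Set.mem_univ, forall_true_left] at hr hs ht hc hn
  have M : ∀ x y u, r x y → r (Cry.meet x u) (Cry.meet y u) :=
    fun x y u h => (hc x y u u h (hr u)).1
  have F : ∀ x y u, r x y → r (Cry.fus x u) (Cry.fus y u) :=
    fun x y u h => (hc x y u u h (hr u)).2.2
  by_cases hbt : r Cry.bot Cry.top
  · right
    have h0 : ∀ x, r Cry.bot x := by
      intro x
      have h := M _ _ x hbt
      cases x <;> exact h
    exact fun x y => ht _ _ _ (hs _ _ (h0 x)) (h0 y)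
  · left
    have B : ∀ y, y ≠ Cry.bot → ¬ r Cry.bot y := by
      intro y hy h
      have h' := F _ _ Cry.top h
      cases y <;> first | exact hy rfl | exact hbt h'
    have T : ∀ y, y ≠ Cry.top → ¬ r Cry.top y := by
      intro y hy h
      have h' := hn _ _ h
      refine B _ ?_ h'
      cases y <;> simp_all [Cry.neg]
    have ta : ¬ r Cry.t Cry.a := fun h =>
      T Cry.f (by simp) (hs _ _ (F _ _ Cry.f h))
    have tb : ¬ r Cry.t Cry.b := fun h =>
      T Cry.f (by simp) (hs _ _ (F _ _ Cry.f h))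
    have tf : ¬ r Cry.t Cry.f := fun h => ta (M _ _ Cry.a h)
    have ab : ¬ r Cry.a Cry.b := fun h => ta (hs _ _ (M _ _ Cry.a h))
    have af : ¬ r Cry.a Cry.f := fun h => ta (hs _ _ (hn _ _ h))
    have bf : ¬ r Cry.b Cry.f := fun h => tb (hs _ _ (hn _ _ h))
    intro x y h
    have h' := hs _ _ h
    by_contra hne
    cases x <;> cases y <;> first
      | exact hne rfl
      | exact B _ (by simp) h
      | exact B _ (by simp) h'
      | exact T _ (by simp) h
      | exact T _ (by simp) h'
      | contradiction
end

section
/- Every subalgebra of the crystal lattice C (including C itself) is simple: for each nonempty subset S of C closed under ∧, ∨, ¬, and ·, every equivalence relation on S compatible with the restricted operations is either the identity relation or the full relation on S. -/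
/-- Every subalgebra of the crystal lattice `C` (including `C` itself) is simple. -/
theorem subalgebras_simple (S : Set Cry) (hS : Cry.IsSubalg S)
    (r : Cry → Cry → Prop) (hcong : Cry.IsCongOn S r) :
    (∀ x ∈ S, ∀ y ∈ S, r x y ↔ x = y) ∨ (∀ x ∈ S, ∀ y ∈ S, r x y) := by
  obtain ⟨-, hop, hneg⟩ := hS
  obtain ⟨hrefl, hsymm, htrans, hc, hn⟩ := hcong
  by_cases hid : ∀ x ∈ S, ∀ y ∈ S, r x y → x = y
  · left
    intro x hx y hy
    exact ⟨hid x hx y hy, fun h => h ▸ hrefl x hx⟩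
  right
  push Not at hid
  obtain ⟨x, hx, y, hy, hxy, hne⟩ := hid
  have htop : Cry.top ∈ S := by
    have h1 := (hop x hx y hy).2.2
    have h2 := (hop x hx x hx).2.2
    have h3 := hneg x hx
    have h4 := (hop _ h3 _ h3).2.2
    have h5 := hneg y hy
    cases x <;> cases y <;> first
      | exact absurd rfl hne
      | assumption
      | exact (hop _ h5 _ h5).2.2 | exact (hop _ hy _ hy).2.2
  have hbot : Cry.bot ∈ S := hneg _ htop
  have key : r Cry.bot Cry.top → ∀ x ∈ S, ∀ y ∈ S, r x y := by
    intro h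
    have h1 : ∀ z ∈ S, r Cry.bot z := by
      intro z hz
      have := (hc _ hbot _ htop _ hz _ hz h (hrefl z hz)).1
      cases z <;> exact this
    intro x hx y hy
    exact htrans x hx _ hbot y hy (hsymm _ hbot x hx (h1 x hx)) (h1 y hy)
  apply key
  have H1 : ∀ z ∈ S, z ≠ Cry.bot → r Cry.bot z → r Cry.bot Cry.top := by
    intro z hz hzb h
    have := (hc _ hbot _ hz _ htop _ htop h (hrefl _ htop)).2.2
    cases z <;> first | exact absurd rfl hzb | exact this
  have H2 : ∀ z ∈ S, z ≠ Cry.top → r z Cry.top → r Cry.bot Cry.top := by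
    intro z hz hzt h
    refine H1 _ (hneg z hz) ?_ (hsymm _ (hneg z hz) _ hbot (hn _ hz _ htop h))
    cases z <;> first | exact absurd rfl hzt | exact Cry.noConfusion
  have H3 : Cry.f ∈ S → ∀ z ∈ S, z ≠ Cry.f → r z Cry.f → r Cry.bot Cry.top := by
    intro hf z hz hzf h
    have h1 := (hc _ hz _ hf _ hz _ hz h (hrefl _ hz)).2.2
    have h2 := (hc _ hz _ hf _ hf _ hf h (hrefl _ hf)).2.2
    cases z
    · exact H1 _ hf (by decide) h
    · exact H2 _ hf (by decide) h2
    · exact H2 _ hz (by decide) h1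
    · exact H2 _ hz (by decide) h1
    · exact absurd rfl hzf
    · exact H2 _ hf (by decide) (hsymm _ hz _ hf h)
  have H4 : Cry.t ∈ S → ∀ z ∈ S, z ≠ Cry.t → r z Cry.t → r Cry.bot Cry.top := by
    intro ht z hz hzt h
    refine H3 (hneg _ ht) _ (hneg z hz) ?_ (hn _ hz _ ht h)
    cases z <;> first | exact absurd rfl hzt | exact Cry.noConfusion
  have hyx := hsymm _ hx _ hy hxy
  have hxx := (hc _ hx _ hy _ hx _ hx hxy (hrefl _ hx)).2.2
  cases x <;> cases y <;> first
    | exact absurd rfl hne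
    | exact H1 _ hy (by decide) hxy
    | exact H1 _ hx (by decide) hyx
    | exact H2 _ hx (by decide) hxy
    | exact H2 _ hy (by decide) hyx
    | exact H3 hy _ hx (by decide) hxy
    | exact H3 hx _ hy (by decide) hyx
    | exact H4 hy _ hx (by decide) hxy
    | exact H4 hx _ hy (by decide) hyx
    | exact H2 _ hx (by decide) hxx
end

section
/- The subalgebras of the crystal lattice C have the congruence extension property: if A ⊆ B are subalgebras of C and Θ is a congruence of A (with respect to the operations ∧, ∨, ¬, · inherited from C), then there exists a congruence Φ of B such that Φ ∩ (A × A) = Θ. -/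
theorem Cry.cong_bot_top (P : Cry → Cry → Prop)
    (sym : ∀ x y, P x y → P y x)
    (tr : ∀ x y z, P x y → P y z → P x z)
    (ng : ∀ x y, P x y → P (Cry.neg x) (Cry.neg y))
    (me : ∀ x y u v, P x y → P u v → P (Cry.meet x u) (Cry.meet y v))
    (fu : ∀ x y u v, P x y → P u v → P (Cry.fus x u) (Cry.fus y v))
    (x y : Cry) (hne : x ≠ y) (h : P x y) : P .bot .top := by
  have rfr : ∀ x y, P x y → P y y := fun x y h => tr _ _ _ (sym _ _ h) h
  have h1 : P .t .bot → P .bot .top := fun h =>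
    sym _ _ (fu _ _ _ _ h (rfr _ _ (ng _ _ h)))
  have h2 : P .f .top → P .bot .top := fun h => h1 (ng _ _ h)
  have h3 : P .t .f → P .bot .top := fun h => h2 (fu _ _ _ _ h (rfr _ _ h))
  have h4 : P .a .t → P .bot .top := fun h => h3 (tr _ _ _ (sym _ _ h) (ng _ _ h))
  have h5 : P .b .t → P .bot .top := fun h => h3 (tr _ _ _ (sym _ _ h) (ng _ _ h))
  have h6 : P .a .f → P .bot .top := fun h => h4 (ng _ _ h)
  have h7 : P .b .f → P .bot .top := fun h => h5 (ng _ _ h)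
  have h8 : P .a .b → P .bot .top := fun h =>
    h4 (me _ _ _ _ (rfr _ _ (sym _ _ h)) h)
  have h9 : P .a .bot → P .bot .top := fun h => tr _ _ _ (sym _ _ h) (ng _ _ h)
  have h10 : P .b .bot → P .bot .top := fun h => tr _ _ _ (sym _ _ h) (ng _ _ h)
  have h11 : P .a .top → P .bot .top := fun h => h9 (ng _ _ h)
  have h12 : P .b .top → P .bot .top := fun h => h10 (ng _ _ h)
  have h13 : P .t .top → P .bot .top := fun h =>
    h2 (fu _ _ _ _ h (rfr _ _ (sym _ _ (ng _ _ h))))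
  have h14 : P .f .bot → P .bot .top := fun h => h13 (ng _ _ h)
  have h' := sym _ _ h
  cases x <;> cases y <;> first
    | exact absurd rfl hne
    | exact h
    | exact h'
    | exact h1 h
    | exact h1 h'
    | exact h2 h
    | exact h2 h'
    | exact h3 h
    | exact h3 h'
    | exact h4 h
    | exact h4 h'
    | exact h5 h
    | exact h5 h'
    | exact h6 h
    | exact h6 h'
    | exact h7 h
    | exact h7 h'
    | exact h8 h
    | exact h8 h'
    | exact h9 h
    | exact h9 h'
    | exact h10 h
    | exact h10 h'
    | exact h11 h
    | exact h11 h'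
    | exact h12 h
    | exact h12 h'
    | exact h13 h
    | exact h13 h'
    | exact h14 h
    | exact h14 h'

/-- The subalgebras of `C` have the congruence extension property. -/
theorem crystal_CEP (A B : Set Cry) (hA : Cry.IsSubalg A) (hB : Cry.IsSubalg B)
    (hAB : A ⊆ B) (Θ : Cry → Cry → Prop) (hΘ : Cry.IsCongOn A Θ) :
    ∃ Φ : Cry → Cry → Prop, Cry.IsCongOn B Φ ∧ ∀ x ∈ A, ∀ y ∈ A, (Φ x y ↔ Θ x y) := by
  by_cases hid : ∀ x ∈ A, ∀ y ∈ A, Θ x y → x = y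
  · refine ⟨fun x y => x = y, ⟨fun _ _ => rfl, fun _ _ _ _ h => h.symm,
      fun _ _ _ _ _ _ h k => h.trans k, ?_, ?_⟩, ?_⟩
    · rintro x - y - u - v - rfl rfl
      exact ⟨rfl, rfl, rfl⟩
    · rintro x - y - rfl
      rfl
    · intro x hx y hy
      refine ⟨?_, hid x hx y hy⟩
      rintro rfl
      exact hΘ.1 x hx
  · push Not at hid
    obtain ⟨x, hx, y, hy, hxy, hne⟩ := hid
    obtain ⟨hr, hs, ht, hop, hn⟩ := hΘ
    obtain ⟨-, hcl, hcn⟩ := hA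
    have key := Cry.cong_bot_top (fun x y => x ∈ A ∧ y ∈ A ∧ Θ x y)
      (fun x y h => ⟨h.2.1, h.1, hs x h.1 y h.2.1 h.2.2⟩)
      (fun x y z h k => ⟨h.1, k.2.1, ht x h.1 y h.2.1 z k.2.1 h.2.2 k.2.2⟩)
      (fun x y h => ⟨hcn x h.1, hcn y h.2.1, hn x h.1 y h.2.1 h.2.2⟩)
      (fun x y u v h k => ⟨(hcl x h.1 u k.1).1, (hcl y h.2.1 v k.2.1).1,
        (hop x h.1 y h.2.1 u k.1 v k.2.1 h.2.2 k.2.2).1⟩)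
      (fun x y u v h k => ⟨(hcl x h.1 u k.1).2.2, (hcl y h.2.1 v k.2.1).2.2,
        (hop x h.1 y h.2.1 u k.1 v k.2.1 h.2.2 k.2.2).2.2⟩)
      x y hne ⟨hx, hy, hxy⟩
    obtain ⟨hb, htop, hbt⟩ := key
    have toTop : ∀ u ∈ A, Θ u .top := by
      intro u hu
      have := (hop u hu u hu _ hb _ htop (hr u hu) hbt).2.1
      cases u <;> exact this
    refine ⟨fun _ _ => True, ⟨fun _ _ => trivial, fun _ _ _ _ _ => trivial,
      fun _ _ _ _ _ _ _ _ => trivial, fun _ _ _ _ _ _ _ _ _ _ => ⟨trivial, trivial, trivial⟩,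
      fun _ _ _ _ _ => trivial⟩, ?_⟩
    intro u hu v hv
    exact ⟨fun _ => ht u hu _ htop v hv (toTop u hu) (hs v hv _ htop (toTop v hv)), fun _ => trivial⟩
end

section
/- The crystal lattice C is extensible: whenever A and B are nontrivial (i.e., having more than one element) subalgebras of C and φ : A → B is an isomorphism (a bijection preserving ∧, ∨, ¬, and ·), there exists an automorphism of C whose restriction to A equals φ. -/
/-- An isomorphism from the subalgebra `A` onto the subalgebra `B`: a bijection of `A`
onto `B` preserving the restricted operations `∧`, `∨`, `·`, and `¬`. -/
def Cry.IsIso (A B : Set Cry) (φ : Cry → Cry) : Prop :=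
  (∀ x ∈ A, φ x ∈ B) ∧
  (∀ x ∈ A, ∀ y ∈ A, φ x = φ y → x = y) ∧
  (∀ y ∈ B, ∃ x ∈ A, φ x = y) ∧
  (∀ x ∈ A, ∀ y ∈ A, φ (Cry.meet x y) = Cry.meet (φ x) (φ y) ∧
      φ (Cry.join x y) = Cry.join (φ x) (φ y) ∧ φ (Cry.fus x y) = Cry.fus (φ x) (φ y)) ∧
  (∀ x ∈ A, φ (Cry.neg x) = Cry.neg (φ x))

/-- `C` is extensible: every isomorphism between nontrivial subalgebras of `C`
extends to an automorphism of `C`. -/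
theorem crystal_extensible (A B : Set Cry) (hA : Cry.IsSubalg A) (hB : Cry.IsSubalg B)
    (hAnt : ∃ x ∈ A, ∃ y ∈ A, x ≠ y) (hBnt : ∃ x ∈ B, ∃ y ∈ B, x ≠ y)
    (φ : Cry → Cry) (hφ : Cry.IsIso A B φ) :
    ∃ ψ : Cry → Cry, Function.Bijective ψ ∧
      (∀ x y : Cry, ψ (Cry.meet x y) = Cry.meet (ψ x) (ψ y)) ∧
      (∀ x y : Cry, ψ (Cry.join x y) = Cry.join (ψ x) (ψ y)) ∧
      (∀ x y : Cry, ψ (Cry.fus x y) = Cry.fus (ψ x) (ψ y)) ∧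
      (∀ x : Cry, ψ (Cry.neg x) = Cry.neg (ψ x)) ∧
      (∀ x ∈ A, ψ x = φ x) := by
  obtain ⟨-, hcl, hneg⟩ := hA
  obtain ⟨-, hinj, -, hop, hn⟩ := hφ
  have key : Cry.bot ∈ A := by
    obtain ⟨x, hx, y, hy, hxy⟩ := hAnt
    -- any nontrivial subalgebra contains bot
    have h1 : ∀ z ∈ A, z = Cry.bot ∨ z = Cry.t ∨ z = Cry.f ∨ z = Cry.top → Cry.bot ∈ A := by
      have hf : Cry.f ∈ A → Cry.bot ∈ A := fun h => hneg _ (hcl _ h _ h).2.2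
      rintro z hz (rfl | rfl | rfl | rfl)
      · exact hz
      · exact hf (hneg _ hz)
      · exact hf hz
      · exact hneg _ hz
    have hab : Cry.a ∈ A → Cry.b ∈ A → Cry.bot ∈ A :=
      fun h h' => hneg _ (hcl _ h _ h').2.2
    cases x <;> cases y <;>
      first
      | exact absurd rfl hxy
      | exact hab hx hy
      | exact hab hy hx
      | exact h1 _ hx (by decide)
      | exact h1 _ hy (by decide)
  have ktop : Cry.top ∈ A := hneg _ key
  have ebot : φ Cry.bot = Cry.bot := by
    have h1 := hn _ key
    have h2 := (hop _ key _ ktop).1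
    have h3 := (hop _ ktop _ ktop).2.2
    have h4 := hinj _ key _ ktop
    simp only [Cry.neg, Cry.meet, Cry.fus, Cry.leb, if_true] at h1 h2 h3
    rw [h1] at h2 h3 h4
    revert h2 h3 h4
    generalize φ Cry.bot = z
    cases z <;> decide
  have etop : φ Cry.top = Cry.top := by
    have h1 := hn _ key
    rw [ebot] at h1
    exact h1
  have et : Cry.t ∈ A → φ Cry.t = Cry.t := by
    intro h
    have h1 : φ Cry.f = _ := hn _ h
    have h2 : φ Cry.t = _ := (hop _ h _ h).2.2
    have h3 := hinj _ h _ (hneg _ h)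
    have h4 := hinj _ h _ key
    have h5 := hinj _ h _ ktop
    simp only [Cry.neg] at h3
    rw [h1] at h3
    rw [ebot] at h4
    rw [etop] at h5
    clear h1
    revert h2 h3 h4 h5
    generalize φ Cry.t = z
    cases z <;> decide
  have ef : Cry.f ∈ A → φ Cry.f = Cry.f := by
    intro h
    have h0 : Cry.t ∈ A := hneg _ h
    have h1 : φ Cry.f = _ := hn _ h0
    rw [et h0] at h1
    exact h1
  have ea : Cry.a ∈ A → φ Cry.a = Cry.a ∨ φ Cry.a = Cry.b := by
    intro h
    have h1 : φ Cry.a = _ := hn _ h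
    revert h1
    generalize φ Cry.a = z
    cases z <;> decide
  have eb : Cry.b ∈ A → φ Cry.b = Cry.b ∨ φ Cry.b = Cry.a := by
    intro h
    have h1 : φ Cry.b = _ := hn _ h
    revert h1
    generalize φ Cry.b = z
    cases z <;> decide
  by_cases hs : (Cry.a ∈ A ∧ φ Cry.a = Cry.b) ∨ (Cry.b ∈ A ∧ φ Cry.b = Cry.a)
  · let s : Cry → Cry := fun x => match x with
      | .a => .b
      | .b => .a
      | z => z
    have hss : ∀ x, s (s x) = x := by intro x; cases x <;> rfl
    refine ⟨s, Function.Involutive.bijective hss, ?_, ?_, ?_, ?_, ?_⟩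
    · intro x y; cases x <;> cases y <;> rfl
    · intro x y; cases x <;> cases y <;> rfl
    · intro x y; cases x <;> cases y <;> rfl
    · intro x; cases x <;> rfl
    · intro x hx
      cases x
      · exact ebot.symm
      · exact (et hx).symm
      · change Cry.b = _
        rcases ea hx with h | h
        · rcases hs with ⟨_, h'⟩ | ⟨hb, h'⟩
          · exact h'.symm
          · exact absurd (hinj _ hx _ hb (h.trans h'.symm)) (by decide)
        · exact h.symm
      · change Cry.a = _
        rcases eb hx with h | h
        · rcases hs with ⟨ha, h'⟩ | ⟨_, h'⟩
          · exact absurd (hinj _ ha _ hx (h'.trans h.symm)) (by decide)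
          · exact h'.symm
        · exact h.symm
      · exact (ef hx).symm
      · exact etop.symm
  · refine ⟨id, Function.bijective_id, fun _ _ => rfl, fun _ _ => rfl, fun _ _ => rfl,
      fun _ => rfl, ?_⟩
    intro x hx
    cases x
    · exact ebot.symm
    · exact (et hx).symm
    · rcases ea hx with h | h
      · exact h.symm
      · exact absurd (Or.inl ⟨hx, h⟩) hs
    · rcases eb hx with h | h
      · exact h.symm
      · exact absurd (Or.inr ⟨hx, h⟩) hs
    · exact (ef hx).symm
    · exact etop.symm
end

section
/- If A and B are distinct isomorphic subalgebras of the crystal lattice C and φ : A → B is an isomorphism (a bijection preserving ∧, ∨, ¬, and ·), then the pair {A, B} is one of the pairs {{a},{b}}, {{⊥,a,⊤},{⊥,b,⊤}}, or {{⊥,t,a,f,⊤},{⊥,t,b,f,⊤}}, and φ maps a to b (or b to a, respectively) and fixes every element of A ∩ {⊥, t, f, ⊤}. -/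
theorem Cry.iso_fix (A B : Set Cry) (hA : Cry.IsSubalg A) (φ : Cry → Cry)
    (hφ : Cry.IsIso A B φ) :
    (Cry.bot ∈ A ↔ Cry.top ∈ A) ∧ (Cry.t ∈ A ↔ Cry.f ∈ A) ∧ (Cry.t ∈ A → Cry.bot ∈ A) ∧
    (Cry.a ∈ A → Cry.b ∈ A → Cry.t ∈ A) ∧
    (Cry.bot ∈ A → φ Cry.bot = Cry.bot) ∧ (Cry.top ∈ A → φ Cry.top = Cry.top) ∧
    (Cry.t ∈ A → φ Cry.t = Cry.t) ∧ (Cry.f ∈ A → φ Cry.f = Cry.f) ∧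
    (Cry.a ∈ A → φ Cry.a = Cry.a ∨ φ Cry.a = Cry.b) ∧
    (Cry.b ∈ A → φ Cry.b = Cry.a ∨ φ Cry.b = Cry.b) := by
  obtain ⟨_, h2, hn⟩ := hA
  obtain ⟨_, inj, _, hop, hneg⟩ := hφ
  have e1 : Cry.bot ∈ A ↔ Cry.top ∈ A := ⟨fun h => hn _ h, fun h => hn _ h⟩
  have e2 : Cry.t ∈ A ↔ Cry.f ∈ A := ⟨fun h => hn _ h, fun h => hn _ h⟩
  have e3 : Cry.t ∈ A → Cry.bot ∈ A := fun h =>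
    e1.2 (h2 _ (e2.1 h) _ (e2.1 h)).2.2
  have e4 : Cry.a ∈ A → Cry.b ∈ A → Cry.t ∈ A := fun h h' => (h2 _ h _ h').1
  have e5 : Cry.bot ∈ A → φ Cry.bot = Cry.bot := by
    intro h
    have i1 := inj _ h _ (e1.1 h)
    have n1 : φ Cry.top = _ := hneg _ h
    have f1 : φ Cry.bot = _ := (hop _ h _ h).2.2
    have f2 : φ Cry.bot = _ := (hop _ h _ (e1.1 h)).2.2
    rw [n1] at i1 f2
    revert i1 f1 f2
    cases φ Cry.bot <;> simp [Cry.neg, Cry.fus]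
  have e6 : Cry.top ∈ A → φ Cry.top = Cry.top := by
    intro h
    have n1 : φ Cry.top = _ := hneg _ (e1.2 h)
    rw [n1, e5 (e1.2 h)]; rfl
  have e7 : Cry.t ∈ A → φ Cry.t = Cry.t := by
    intro h
    have i1 := inj _ h _ (e2.1 h)
    have i2 := inj _ h _ (e3 h)
    have i3 := inj _ h _ (e1.1 (e3 h))
    have n1 : φ Cry.f = _ := hneg _ h
    have f1 : φ Cry.t = _ := (hop _ h _ h).2.2
    rw [n1] at i1
    rw [e5 (e3 h)] at i2
    rw [e6 (e1.1 (e3 h))] at i3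
    revert i1 i2 i3 f1
    cases φ Cry.t <;> simp [Cry.neg, Cry.fus]
  have e8 : Cry.f ∈ A → φ Cry.f = Cry.f := by
    intro h
    have n1 : φ Cry.f = _ := hneg _ (e2.2 h)
    rw [n1, e7 (e2.2 h)]; rfl
  refine ⟨e1, e2, e3, e4, e5, e6, e7, e8, ?_, ?_⟩
  · intro h
    have n1 : φ Cry.a = _ := hneg _ h
    revert n1
    cases φ Cry.a <;> simp [Cry.neg]
  · intro h
    have n1 : φ Cry.b = _ := hneg _ h
    revert n1
    cases φ Cry.b <;> simp [Cry.neg]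

theorem Cry.set_ext (A B : Set Cry) (h0 : Cry.bot ∈ A ↔ Cry.bot ∈ B) (h1 : Cry.t ∈ A ↔ Cry.t ∈ B)
    (h2 : Cry.a ∈ A ↔ Cry.a ∈ B) (h3 : Cry.b ∈ A ↔ Cry.b ∈ B) (h4 : Cry.f ∈ A ↔ Cry.f ∈ B)
    (h5 : Cry.top ∈ A ↔ Cry.top ∈ B) : A = B := by
  ext x; cases x <;> assumption

theorem Cry.pair_cases (A B : Set Cry)
    (e1 : Cry.bot ∈ A ↔ Cry.top ∈ A) (e2 : Cry.t ∈ A ↔ Cry.f ∈ A) (e3 : Cry.t ∈ A → Cry.bot ∈ A)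
    (h0 : Cry.bot ∈ A ↔ Cry.bot ∈ B) (h1 : Cry.t ∈ A ↔ Cry.t ∈ B)
    (h4 : Cry.f ∈ A ↔ Cry.f ∈ B) (h5 : Cry.top ∈ A ↔ Cry.top ∈ B)
    (ha : Cry.a ∈ A) (hb : Cry.b ∉ A) (ha' : Cry.a ∉ B) (hb' : Cry.b ∈ B) :
    (A = {Cry.a} ∧ B = {Cry.b}) ∨
    (A = {Cry.bot, Cry.a, Cry.top} ∧ B = {Cry.bot, Cry.b, Cry.top}) ∨
    (A = {Cry.bot, Cry.t, Cry.a, Cry.f, Cry.top} ∧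
      B = {Cry.bot, Cry.t, Cry.b, Cry.f, Cry.top}) := by
  by_cases c0 : Cry.bot ∈ A
  · by_cases c1 : Cry.t ∈ A
    · right; right
      constructor <;> apply Cry.set_ext <;> simp_all
    · right; left
      constructor <;> apply Cry.set_ext <;> simp_all
  · left
    constructor <;> apply Cry.set_ext <;> simp_all

/-- Distinct isomorphic subalgebras of `C` come from one of three pairs, and any
isomorphism between them swaps `a` and `b` and fixes the common part `{⊥, t, f, ⊤}`. -/
theorem distinct_isomorphic_subalgebras (A B : Set Cry)
    (hA : Cry.IsSubalg A) (hB : Cry.IsSubalg B) (hne : A ≠ B)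
    (φ : Cry → Cry) (hφ : Cry.IsIso A B φ) :
    (({A, B} : Set (Set Cry)) = {{Cry.a}, {Cry.b}} ∨
     ({A, B} : Set (Set Cry)) =
        {{Cry.bot, Cry.a, Cry.top}, {Cry.bot, Cry.b, Cry.top}} ∨
     ({A, B} : Set (Set Cry)) =
        {{Cry.bot, Cry.t, Cry.a, Cry.f, Cry.top}, {Cry.bot, Cry.t, Cry.b, Cry.f, Cry.top}}) ∧
    (Cry.a ∈ A → φ Cry.a = Cry.b) ∧
    (Cry.b ∈ A → φ Cry.b = Cry.a) ∧
    (∀ x ∈ A ∩ ({Cry.bot, Cry.t, Cry.f, Cry.top} : Set Cry), φ x = x) := by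
  obtain ⟨e1, e2, e3, e4, p0, p5, p1, p4, pa, pb⟩ := Cry.iso_fix A B hA φ hφ
  obtain ⟨mem, inj, sur, _, _⟩ := hφ
  have sur' : ∀ y ∈ B, (Cry.bot ∈ A ∧ y = Cry.bot) ∨ (Cry.t ∈ A ∧ y = Cry.t) ∨
      (Cry.a ∈ A ∧ y = φ Cry.a) ∨ (Cry.b ∈ A ∧ y = φ Cry.b) ∨
      (Cry.f ∈ A ∧ y = Cry.f) ∨ (Cry.top ∈ A ∧ y = Cry.top) := by
    intro y hy
    obtain ⟨x, hx, rfl⟩ := sur y hy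
    cases x <;> simp_all
  have iab : Cry.a ∈ A → Cry.b ∈ A → φ Cry.a ≠ φ Cry.b := fun h h' e => by
    have := inj _ h _ h' e
    cases this
  have h0 : Cry.bot ∈ A ↔ Cry.bot ∈ B :=
    ⟨fun h => p0 h ▸ mem _ h, fun h => by have := sur' _ h; grind⟩
  have h1 : Cry.t ∈ A ↔ Cry.t ∈ B :=
    ⟨fun h => p1 h ▸ mem _ h, fun h => by have := sur' _ h; grind⟩
  have h4 : Cry.f ∈ A ↔ Cry.f ∈ B :=
    ⟨fun h => p4 h ▸ mem _ h, fun h => by have := sur' _ h; grind⟩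
  have h5 : Cry.top ∈ A ↔ Cry.top ∈ B :=
    ⟨fun h => p5 h ▸ mem _ h, fun h => by have := sur' _ h; grind⟩
  have hab : ¬ ((Cry.a ∈ A ↔ Cry.a ∈ B) ∧ (Cry.b ∈ A ↔ Cry.b ∈ B)) := fun h =>
    hne (Cry.set_ext A B h0 h1 h.1 h.2 h4 h5)
  have sa := sur' Cry.a
  have sb := sur' Cry.b
  have ma := mem Cry.a
  have mb := mem Cry.b
  have key : (Cry.a ∈ A ∧ Cry.b ∉ A ∧ Cry.a ∉ B ∧ Cry.b ∈ B ∧ φ Cry.a = Cry.b) ∨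
      (Cry.b ∈ A ∧ Cry.a ∉ A ∧ Cry.b ∉ B ∧ Cry.a ∈ B ∧ φ Cry.b = Cry.a) := by
    clear sur' sur inj mem hne hA hB
    by_cases ca : Cry.a ∈ A <;> by_cases cb : Cry.b ∈ A <;> grind
  refine ⟨?_, fun h => ?_, fun h => ?_, ?_⟩
  · rcases key with ⟨k1, k2, k3, k4, _⟩ | ⟨k1, k2, k3, k4, _⟩
    · rcases Cry.pair_cases A B e1 e2 e3 h0 h1 h4 h5 k1 k2 k3 k4 with
        ⟨u, v⟩ | ⟨u, v⟩ | ⟨u, v⟩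
      · left; rw [u, v]
      · right; left; rw [u, v]
      · right; right; rw [u, v]
    · rcases Cry.pair_cases B A (by rw [← h0, ← h5, e1]) (by rw [← h1, ← h4, e2]) (by rw [← h1, ← h0]; exact e3) h0.symm h1.symm h4.symm h5.symm
        k4 k3 k2 k1 with ⟨u, v⟩ | ⟨u, v⟩ | ⟨u, v⟩
      · left; rw [u, v, Set.pair_comm]
      · right; left; rw [u, v, Set.pair_comm]
      · right; right; rw [u, v, Set.pair_comm]
  · rcases key with k | k
    · exact k.2.2.2.2
    · exact absurd h k.2.1
  · rcases key with k | k
    · exact absurd h k.2.1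
    · exact k.2.2.2.2
  · rintro x ⟨hx, hx'⟩
    simp only [Set.mem_insert_iff, Set.mem_singleton_iff] at hx'
    rcases hx' with rfl | rfl | rfl | rfl
    · exact p0 hx
    · exact p1 hx
    · exact p4 hx
    · exact p5 hx
end

section
/- The crystal lattice C is a commutative involutive residuated distributive lattice: (C, ∧, ∨) is a distributive lattice, (C, ·, t) is a commutative monoid, ¬ is an order-reversing involution (¬¬x = x, and x ≤ y implies ¬y ≤ ¬x), and, defining x → y = ¬(x · ¬y), the residuation law x·y ≤ z if and only if x ≤ y → z holds for all x, y, z in C. -/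
/-- The lattice order of `C` as a proposition. -/
def Cry.le (x y : Cry) : Prop := Cry.leb x y = true

/-- `C` is a commutative involutive residuated distributive lattice. -/
theorem crystal_residuated_lattice :
    (∀ x y : Cry, Cry.le x y ↔ Cry.meet x y = x) ∧
    (∀ x y : Cry, Cry.meet x y = Cry.meet y x) ∧
    (∀ x y : Cry, Cry.join x y = Cry.join y x) ∧
    (∀ x y z : Cry, Cry.meet (Cry.meet x y) z = Cry.meet x (Cry.meet y z)) ∧
    (∀ x y z : Cry, Cry.join (Cry.join x y) z = Cry.join x (Cry.join y z)) ∧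
    (∀ x y : Cry, Cry.meet x (Cry.join x y) = x) ∧
    (∀ x y : Cry, Cry.join x (Cry.meet x y) = x) ∧
    (∀ x y z : Cry, Cry.meet x (Cry.join y z) = Cry.join (Cry.meet x y) (Cry.meet x z)) ∧
    (∀ x y z : Cry, Cry.fus (Cry.fus x y) z = Cry.fus x (Cry.fus y z)) ∧
    (∀ x y : Cry, Cry.fus x y = Cry.fus y x) ∧
    (∀ x : Cry, Cry.fus Cry.t x = x) ∧
    (∀ x : Cry, Cry.neg (Cry.neg x) = x) ∧
    (∀ x y : Cry, Cry.le x y → Cry.le (Cry.neg y) (Cry.neg x)) ∧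
    (∀ x y z : Cry, Cry.le (Cry.fus x y) z ↔ Cry.le x (Cry.neg (Cry.fus y (Cry.neg z)))) := by
  unfold Cry.le
  refine ⟨?_, ?_, ?_, ?_, ?_, ?_, ?_, ?_, ?_, ?_, ?_, ?_, ?_, ?_⟩
  all_goals
    intro x
    cases x
  all_goals try (intro y; cases y)
  all_goals try (intro z; cases z)
  all_goals decide
end
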